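/- For every k ≥ 2 there exists D = D(k) > 0 such that the following holds for all n. Let F be the finite field with 2^m elements where 2n ≤ 2^m ≤ 4n, let τ : [n] ↪ F* be injective, let C > 0, let L ∈ H_{k−1}(n) be such that τ(L) is C-affine-bounded, and let S ⊆ K_k(L) be a K_k-decomposition of L. Then for every facet f of [n] with f ∉ L: Σ_{F ∈ FO} Σ_{s ∈ S} |{a ∈ F^k : F_1 τ(s) + F_2 a = τ(f)}| ≤ D·C·|F|·|L|. -/

import Mathlib

open Finset

section LinOps

variable (F : Type*) [Field F] (k : ℕ)

/-- Inclusion of the first block: `x ↦ (x, 0)`. -/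
def inlMap : (Fin k → F) →ₗ[F] ((Fin k ⊕ Fin k) → F) where
  toFun x := Sum.elim x 0
  map_add' x y := by funext s; cases s <;> simp
  map_smul' c x := by funext s; cases s <;> simp

/-- Inclusion of the second block: `a ↦ (0, a)`. -/
def inrMap : (Fin k → F) →ₗ[F] ((Fin k ⊕ Fin k) → F) where
  toFun a := Sum.elim 0 a
  map_add' x y := by funext s; cases s <;> simp
  map_smul' c x := by funext s; cases s <;> simp

variable {F k}

/-- For `T : F^{2k} → M`, the map `T₁ : F^k → M`, `x ↦ T(x,0)`. -/
def leftPart {M : Type*} [AddCommMonoid M] [Module F M]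
    (T : ((Fin k ⊕ Fin k) → F) →ₗ[F] M) : (Fin k → F) →ₗ[F] M :=
  T ∘ₗ inlMap F k

/-- For `T : F^{2k} → M`, the map `T₂ : F^k → M`, `a ↦ T(0,a)`. -/
def rightPart {M : Type*} [AddCommMonoid M] [Module F M]
    (T : ((Fin k ⊕ Fin k) → F) →ₗ[F] M) : (Fin k → F) →ₗ[F] M :=
  T ∘ₗ inrMap F k

variable (F k)

/-- The operator `C : F^k → F^{2k}` given by the block matrix `[I; J + I]`. -/
def Cop : (Fin k → F) →ₗ[F] ((Fin k ⊕ Fin k) → F) where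
  toFun x := Sum.elim x fun i => x i + ∑ j, x j
  map_add' x y := by
    funext s; cases s <;> simp [Finset.sum_add_distrib] <;> ring
  map_smul' c x := by
    funext s; cases s <;> simp [Finset.mul_sum, mul_add]

variable {k}

/-- The operator `E_I : F^{2k} → F^k` given by the block matrix `[X_{[k]\I} X_I]`. -/
def Eop (I : Finset (Fin k)) : ((Fin k ⊕ Fin k) → F) →ₗ[F] (Fin k → F) where
  toFun y i := if i ∈ I then y (Sum.inr i) else y (Sum.inl i)
  map_add' x y := by funext i; by_cases h : i ∈ I <;> simp [h]
  map_smul' c x := by funext i; by_cases h : i ∈ I <;> simp [h]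

variable {F}

/-- The map `Fin (k-1) → Fin k` skipping `i`. -/
def delIdx {k : ℕ} (i : Fin k) (j : Fin (k - 1)) : Fin k :=
  if (j : ℕ) < (i : ℕ) then ⟨j, by have := j.isLt; omega⟩
  else ⟨(j : ℕ) + 1, by have := j.isLt; omega⟩

variable (F)

/-- The projection `P_i : F^k → F^{k-1}` deleting the `i`-th coordinate. -/
def Pop (i : Fin k) : (Fin k → F) →ₗ[F] (Fin (k - 1) → F) :=
  LinearMap.funLeft F F (delIdx i)

variable (k)

/-- The vertex operators `VO = VO₁ ∪ VO₂`. -/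
def VO : Set (((Fin k ⊕ Fin k) → F) →ₗ[F] F) :=
  {V | (∃ i : Fin k, V = LinearMap.proj i ∘ₗ Eop F (∅ : Finset (Fin k)) ∨
          V = LinearMap.proj i ∘ₗ Eop F (Finset.univ : Finset (Fin k))) ∨
       (∃ (i : Fin k) (I : Finset (Fin k)), I.Nonempty ∧ Even I.card ∧
          V = LinearMap.proj i ∘ₗ Eop F (Finset.univ : Finset (Fin k)) ∘ₗ Cop F k ∘ₗ Eop F I)}

/-- The facet operators `FO₁ = {P_i E_∅}`. -/
def FO1 : Set (((Fin k ⊕ Fin k) → F) →ₗ[F] (Fin (k - 1) → F)) :=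
  {T | ∃ i : Fin k, T = Pop F i ∘ₗ Eop F (∅ : Finset (Fin k))}

/-- The facet operators `FO₂ = {P_i E_J C E_I : |J| even, I ≠ ∅, |I| even}`. -/
def FO2 : Set (((Fin k ⊕ Fin k) → F) →ₗ[F] (Fin (k - 1) → F)) :=
  {T | ∃ (i : Fin k) (J I : Finset (Fin k)), Even J.card ∧ I.Nonempty ∧ Even I.card ∧
        T = Pop F i ∘ₗ Eop F J ∘ₗ Cop F k ∘ₗ Eop F I}

/-- The facet operators `FO = FO₁ ∪ FO₂`. -/
def FO : Set (((Fin k ⊕ Fin k) → F) →ₗ[F] (Fin (k - 1) → F)) :=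
  FO1 F k ∪ FO2 F k

/-- The edge operators `EO = EO₁ ∪ EO₂`. -/
def EO : Set (((Fin k ⊕ Fin k) → F) →ₗ[F] (Fin k → F)) :=
  {T | (∃ I : Finset (Fin k), Odd I.card ∧ T = Eop F I) ∨
       (∃ J I : Finset (Fin k), J.Nonempty ∧ I.Nonempty ∧ Even I.card ∧
          T = Eop F J ∘ₗ Cop F k ∘ₗ Eop F I)}

end LinOps

/-- A set `S ⊆ F^ι` is `C`-affine-bounded if for every affine subspace `A` of
dimension at least 1, `|A ∩ S| ≤ C·|A|·|S|/|F|^{|ι|}`. -/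
def AffineBounded (F : Type*) [Field F] [Fintype F] {ι : Type*} [Fintype ι]
    (C : ℝ) (S : Set (ι → F)) : Prop :=
  ∀ A : AffineSubspace F (ι → F), (A : Set (ι → F)).Nonempty →
    1 ≤ Module.finrank F A.direction →
    (Set.ncard ((A : Set (ι → F)) ∩ S) : ℝ) ≤
      C * (Nat.card (A : Set (ι → F))) * (Set.ncard S) / (Fintype.card F : ℝ) ^ (Fintype.card ι)

open Finset

/-- A set `S` of `k`-subsets, each having all its `(k-1)`-subsets in `G`,
such that every facet of `G` lies in exactly one edge of `S`. -/
def IsKDecompositionOf {V : Type*} [DecidableEq V] (k : ℕ) (G S : Finset (Finset V)) : Prop :=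
  (∀ e ∈ S, e.card = k ∧ ∀ f ⊆ e, f.card = k - 1 → f ∈ G) ∧
  (∀ f ∈ G, ∃! e, e ∈ S ∧ f ⊆ e)

open Classical in
/-- The facet operators `FO = FO₁ ∪ FO₂` as a finite set. -/
noncomputable def FOfin (F : Type*) [Field F] (k : ℕ) :
    Finset (((Fin k ⊕ Fin k) → F) →ₗ[F] (Fin (k - 1) → F)) :=
  (Finset.univ.image fun i : Fin k => Pop F i ∘ₗ Eop F (∅ : Finset (Fin k))) ∪
  (((Finset.univ : Finset (Fin k × Finset (Fin k) × Finset (Fin k))).filter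
      fun t => Even t.2.1.card ∧ t.2.2.Nonempty ∧ Even t.2.2.card).image
    fun t => Pop F t.1 ∘ₗ Eop F t.2.1 ∘ₗ Cop F k ∘ₗ Eop F t.2.2)

/-! Throughout, `T₁ = leftPart T` and `T₂ = rightPart T`. An operator `P_i E_∅` contributes nothing,
since it sends `(τ(s), a)` to the vector of a facet of `s`, which lies in `L`. Let
`T = P_i E_J C E_I` be one of the other operators and let `p ∈ I`. Then `T₁` ignores the `p`-th
coordinate, so `T₁ τ(s)` depends only on the `p`-th facet of `s`; these facets are distinct
elements of `L`. The vectors `w ∈ F^(k-1)` for which the resulting equation has a solution `a` form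
an affine subspace `A`, each `w ∈ A` having `|ker T₂|` solutions, and
`|A| |ker T₂| = |F|^k` because `T` is surjective. As `T₂ ≠ 0`, affine-boundedness applies to `A`
and to its images under the `(k-1)!` permutations of the coordinates; the latter are needed because
a facet of `s` may be ordered differently in `s` and in `L`. -/

section AffineBounded

variable {F : Type*} [Field F] [Fintype F] {ι κ : Type*} [Fintype ι] [Fintype κ]
  {C : ℝ} {Q : Set (ι → F)}

lemma AffineBounded.image_linearEquiv (hQ : AffineBounded F C Q) (e : (ι → F) ≃ₗ[F] (κ → F)) :
    AffineBounded F C (e '' Q) := by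
  intro A hA hdim
  set B : AffineSubspace F (ι → F) := A.map e.symm.toLinearMap.toAffineMap with hB
  have coe_B : (B : Set (ι → F)) = e.symm '' A := rfl
  have image_inter : e '' (B ∩ Q) = (A : Set (κ → F)) ∩ e '' Q := by
    rw [coe_B, Set.image_inter e.injective, ← Set.image_comp]
    simp
  have finrank_B : Module.finrank F B.direction = Module.finrank F A.direction := by
    rw [hB, AffineSubspace.map_direction]
    exact LinearEquiv.finrank_map_eq e.symm _
  have card_B : Nat.card (B : Set (ι → F)) = Nat.card (A : Set (κ → F)) := by
    rw [coe_B, Nat.card_image_of_injective e.symm.injective]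
  have card_index : Fintype.card ι = Fintype.card κ := by
    simpa using LinearEquiv.finrank_eq e
  rw [← image_inter, Set.ncard_image_of_injective _ e.injective,
    Set.ncard_image_of_injective _ e.injective, ← card_B, ← card_index]
  exact hQ B (hA.image _) (finrank_B ▸ hdim)

/-- The set of vectors obtained from the members of `Q` by permuting their coordinates. It makes the
arbitrary orderings in the definition of `τ(L)` irrelevant. -/
def reorderings {ι α : Type*} (Q : Set (ι → α)) : Set (ι → α) :=
  ⋃ σ : Equiv.Perm ι, (fun w => w ∘ σ) '' Q

lemma AffineBounded.ncard_inter_reorderings_le (hQ : AffineBounded F C Q)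
    {A : AffineSubspace F (ι → F)} (hA : (A : Set (ι → F)).Nonempty)
    (hdim : 1 ≤ Module.finrank F A.direction) :
    (Set.ncard ((A : Set (ι → F)) ∩ reorderings Q) : ℝ) ≤
      (Fintype.card ι).factorial * (C * Nat.card (A : Set (ι → F)) * Set.ncard Q /
        (Fintype.card F : ℝ) ^ Fintype.card ι) := by
  classical
  have bound_perm (σ : Equiv.Perm ι) :
      (Set.ncard ((A : Set (ι → F)) ∩ (fun w => w ∘ σ) '' Q) : ℝ) ≤
        C * Nat.card (A : Set (ι → F)) * Set.ncard Q / (Fintype.card F : ℝ) ^ Fintype.card ι := by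
    have h := hQ.image_linearEquiv (LinearEquiv.funCongrLeft F F σ) A hA hdim
    rwa [Set.ncard_image_of_injective _ (LinearEquiv.injective _)] at h
  calc (Set.ncard ((A : Set (ι → F)) ∩ reorderings Q) : ℝ)
      ≤ ∑ σ : Equiv.Perm ι, (Set.ncard ((A : Set (ι → F)) ∩ (fun w => w ∘ σ) '' Q) : ℝ) := by
        rw [reorderings, Set.inter_iUnion]
        exact_mod_cast Set.ncard_iUnion_le_of_fintype _
    _ ≤ ∑ _σ : Equiv.Perm ι,
          C * Nat.card (A : Set (ι → F)) * Set.ncard Q / (Fintype.card F : ℝ) ^ Fintype.card ι :=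
        Finset.sum_le_sum fun σ _ => bound_perm σ
    _ = _ := by rw [Finset.sum_const, Finset.card_univ, Fintype.card_perm, nsmul_eq_mul]

end AffineBounded

section SolvableSubspace

variable {F W E M : Type*} [Field F] [AddCommGroup W] [Module F W] [AddCommGroup E]
  [Module F E] [AddCommGroup M] [Module F M] {g : W →ₗ[F] M} {h : E →ₗ[F] M}

variable (g h) in
/-- The affine subspace of those `w` for which the equation `g w + h a = t` has a solution `a`. -/
def solvableSubspace (t : M) : AffineSubspace F W :=
  (AffineSubspace.mk' t (LinearMap.range h)).comap g.toAffineMap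

lemma mem_solvableSubspace {t : M} {w : W} :
    w ∈ solvableSubspace g h t ↔ ∃ a, g w + h a = t := by
  rw [solvableSubspace, AffineSubspace.mem_comap, AffineSubspace.mem_mk', vsub_eq_sub,
    ← neg_mem_iff, neg_sub, LinearMap.mem_range]
  simp [eq_sub_iff_add_eq']

lemma solvableSubspace_nonempty (hgh : LinearMap.range g ⊔ LinearMap.range h = ⊤) (t : M) :
    (solvableSubspace g h t : Set W).Nonempty := by
  obtain ⟨_, ⟨w, rfl⟩, _, ⟨a, rfl⟩, hwa⟩ :=
    Submodule.mem_sup.1 (hgh ▸ Submodule.mem_top : t ∈ LinearMap.range g ⊔ LinearMap.range h)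
  exact ⟨w, mem_solvableSubspace.2 ⟨a, hwa⟩⟩

lemma direction_solvableSubspace {t : M} (hne : (solvableSubspace g h t : Set W).Nonempty) :
    (solvableSubspace g h t).direction = (LinearMap.range h).comap g := by
  obtain ⟨w₀, hw₀⟩ := hne
  ext v
  rw [← AffineSubspace.vadd_mem_iff_mem_direction v hw₀]
  simp only [solvableSubspace, SetLike.mem_coe, AffineSubspace.mem_comap,
    AffineSubspace.mem_mk', LinearMap.coe_toAffineMap, vsub_eq_sub] at hw₀ ⊢
  rw [vadd_eq_add, map_add, add_sub_assoc, Submodule.add_mem_iff_left _ hw₀, Submodule.mem_comap]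

lemma card_comap_mul_card_of_range_sup_eq_top {N : Submodule F M}
    (hgN : LinearMap.range g ⊔ N = ⊤) :
    Nat.card (N.comap g) * Nat.card M = Nat.card N * Nat.card W := by
  have index_comap : (N.comap g).toAddSubgroup.index = N.toAddSubgroup.index := by
    have range_sup : g.toAddMonoidHom.range ⊔ N.toAddSubgroup = ⊤ := by
      have := congrArg Submodule.toAddSubgroup hgN
      rwa [Submodule.sup_toAddSubgroup] at this
    calc (N.comap g).toAddSubgroup.index
        = N.toAddSubgroup.relIndex g.toAddMonoidHom.range :=
          N.toAddSubgroup.index_comap g.toAddMonoidHom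
      _ = N.toAddSubgroup.index := by
          rw [← AddSubgroup.relIndex_sup_right, range_sup, AddSubgroup.relIndex_top_right]
  have card_W := (N.comap g).toAddSubgroup.card_mul_index
  have card_M := N.toAddSubgroup.card_mul_index
  rw [← card_W, ← card_M, index_comap]
  exact mul_left_comm _ _ _

lemma card_solvableSubspace_mul_card_ker_mul_card
    (hgh : LinearMap.range g ⊔ LinearMap.range h = ⊤) (t : M) :
    Nat.card (solvableSubspace g h t : Set W) * Nat.card (LinearMap.ker h) * Nat.card M =
      Nat.card W * Nat.card E := by
  have hne := solvableSubspace_nonempty hgh t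
  have : Nonempty (solvableSubspace g h t) := hne.to_subtype
  have card_direction : Nat.card (solvableSubspace g h t : Set W) =
      Nat.card ((LinearMap.range h).comap g) := by
    rw [← direction_solvableSubspace hne]
    exact Nat.card_congr (Equiv.vaddConst (Classical.arbitrary (solvableSubspace g h t))).symm
  have card_range : Nat.card (LinearMap.ker h) * Nat.card (LinearMap.range h) = Nat.card E := by
    rw [← (LinearMap.ker h).toAddSubgroup.card_mul_index]
    exact congrArg _ (AddSubgroup.index_ker h.toAddMonoidHom).symm
  rw [card_direction, ← card_range, mul_right_comm, card_comap_mul_card_of_range_sup_eq_top hgh]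
  ring

lemma ncard_setOf_add_eq_le_card_ker [Finite E] (u t : M) :
    Set.ncard {a | u + h a = t} ≤ Nat.card (LinearMap.ker h) := by
  obtain hempty | ⟨a₀, ha₀⟩ := Set.eq_empty_or_nonempty {a | u + h a = t}
  · simp [hempty]
  · refine Set.ncard_le_ncard_of_injOn (t := (LinearMap.ker h : Set E)) (fun a => a - a₀)
      (fun a ha => ?_) sub_left_injective.injOn (Set.toFinite _)
    have : u + h a = u + h a₀ := ha.trans ha₀.symm
    simpa [sub_eq_zero] using this

open Classical in
lemma sum_ncard_setOf_add_eq_le [Finite E] {α : Type*} (s : Finset α) (x : α → W) (t : M) :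
    ∑ i ∈ s, Set.ncard {a | g (x i) + h a = t} ≤
      #{i ∈ s | x i ∈ solvableSubspace g h t} * Nat.card (LinearMap.ker h) := by
  rw [← smul_eq_mul, ← Finset.sum_const, Finset.sum_filter]
  refine Finset.sum_le_sum fun i _ => ?_
  split_ifs with hi
  · exact ncard_setOf_add_eq_le_card_ker _ _
  · rw [mem_solvableSubspace, not_exists] at hi
    simp [hi]

lemma comap_ne_bot_of_ne_bot [FiniteDimensional F W] {f : W →ₗ[F] W} {N : Submodule F W}
    (hN : N ≠ ⊥) : N.comap f ≠ ⊥ := by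
  intro hbot
  have hinj : Function.Injective f :=
    LinearMap.ker_eq_bot.1 (eq_bot_mono (LinearMap.ker_le_comap f) hbot)
  have hsurj : Function.Surjective f := LinearMap.injective_iff_surjective.1 hinj
  apply hN
  rw [← Submodule.map_comap_eq_of_surjective hsurj N, hbot, Submodule.map_bot]

end SolvableSubspace

/-- The bound is the number of pairs `(q, a) ∈ Q × E` divided by the number of possible values of
`g q + h a`, up to the factor `|ι|! C`. -/
theorem AffineBounded.sum_ncard_solutions_le {F E M ι α : Type*} [Field F] [Fintype F]
    [Fintype ι] [AddCommGroup E] [Module F E] [Finite E] [AddCommGroup M] [Module F M] [Finite M]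
    {C : ℝ} {Q : Set (ι → F)} (hQ : AffineBounded F C Q)
    {g : (ι → F) →ₗ[F] M} {h : E →ₗ[F] M} (hgh : LinearMap.range g ⊔ LinearMap.range h = ⊤)
    (hdim : (LinearMap.range h).comap g ≠ ⊥) {s : Finset α} {x : α → ι → F}
    (hmaps : Set.MapsTo x s (reorderings Q)) (hinj : Set.InjOn x s) (t : M) :
    ∑ i ∈ s, (Set.ncard {a | g (x i) + h a = t} : ℝ) ≤
      (Fintype.card ι).factorial * C * Set.ncard Q * Nat.card E / Nat.card M := by
  classical
  set A := solvableSubspace g h t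
  have hne : (A : Set (ι → F)).Nonempty := solvableSubspace_nonempty hgh t
  have one_le_finrank : 1 ≤ Module.finrank F A.direction := by
    rwa [direction_solvableSubspace hne, Submodule.one_le_finrank_iff]
  have card_le : #{i ∈ s | x i ∈ A} ≤ Set.ncard ((A : Set (ι → F)) ∩ reorderings Q) := by
    rw [← Set.ncard_coe_finset]
    refine Set.ncard_le_ncard_of_injOn x (fun i hi => ?_)
      (hinj.mono (Finset.filter_subset _ _)) (Set.toFinite _)
    obtain ⟨his, hiA⟩ := Finset.mem_filter.1 hi
    exact ⟨hiA, hmaps his⟩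
  have card_A : (Nat.card (A : Set (ι → F)) * Nat.card (LinearMap.ker h) * Nat.card M : ℝ) =
      (Fintype.card F : ℝ) ^ Fintype.card ι * Nat.card E := by
    have := card_solvableSubspace_mul_card_ker_mul_card hgh t
    rw [Nat.card_eq_fintype_card (α := ι → F), Fintype.card_fun] at this
    exact_mod_cast this
  have card_M_pos : (0 : ℝ) < Nat.card M := by exact_mod_cast Nat.card_pos
  calc ∑ i ∈ s, (Set.ncard {a | g (x i) + h a = t} : ℝ)
      ≤ #{i ∈ s | x i ∈ A} * Nat.card (LinearMap.ker h) := by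
        exact_mod_cast sum_ncard_setOf_add_eq_le s x t
    _ ≤ Set.ncard ((A : Set (ι → F)) ∩ reorderings Q) * Nat.card (LinearMap.ker h) := by
        gcongr
    _ ≤ (Fintype.card ι).factorial * (C * Nat.card (A : Set (ι → F)) * Set.ncard Q /
          (Fintype.card F : ℝ) ^ Fintype.card ι) * Nat.card (LinearMap.ker h) := by
        gcongr
        exact hQ.ncard_inter_reorderings_le hne one_le_finrank
    _ = _ := by
        field_simp
        linear_combination C * Set.ncard Q * card_A

lemma delIdx_eq_succAbove {d : ℕ} (i : Fin (d + 1)) : delIdx i = i.succAbove := by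
  funext j
  ext
  simp only [delIdx, Fin.succAbove, Fin.lt_def, Fin.val_castSucc]
  split_ifs <;> simp

lemma delIdx_injective {k : ℕ} (i : Fin k) : Function.Injective (delIdx i) := by
  cases k with
  | zero => exact i.elim0
  | succ d => exact delIdx_eq_succAbove i ▸ Fin.succAbove_right_injective

lemma range_delIdx {k : ℕ} (i : Fin k) : Set.range (delIdx i) = {i}ᶜ := by
  cases k with
  | zero => exact i.elim0
  | succ d => exact delIdx_eq_succAbove i ▸ Fin.range_succAbove i

section Operators

variable {F : Type*} [Field F] {k : ℕ}

lemma leftPart_add_rightPart {M : Type*} [AddCommMonoid M] [Module F M]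
    (T : ((Fin k ⊕ Fin k) → F) →ₗ[F] M) (x a : Fin k → F) :
    leftPart T x + rightPart T a = T (Sum.elim x a) := by
  rw [leftPart, rightPart, LinearMap.comp_apply, LinearMap.comp_apply, ← map_add]
  congr 1
  ext (i | i) <;> simp [inlMap, inrMap]

lemma range_leftPart_sup_range_rightPart {M : Type*} [AddCommMonoid M] [Module F M]
    {T : ((Fin k ⊕ Fin k) → F) →ₗ[F] M} (hT : Function.Surjective T) :
    LinearMap.range (leftPart T) ⊔ LinearMap.range (rightPart T) = ⊤ := by
  refine eq_top_iff.2 fun z _ => ?_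
  obtain ⟨y, rfl⟩ := hT z
  rw [← Sum.elim_comp_inl_inr y, ← leftPart_add_rightPart]
  exact Submodule.add_mem_sup (LinearMap.mem_range_self _ _) (LinearMap.mem_range_self _ _)

variable (F) in
lemma Pop_surjective (i : Fin k) : Function.Surjective (Pop F i) :=
  LinearMap.funLeft_surjective_of_injective F F _ (delIdx_injective i)

lemma eq_single_of_Pop_eq_zero {p : Fin k} {x : Fin k → F} (hx : Pop F p x = 0) :
    x = Pi.single p (x p) := by
  funext q
  by_cases hq : q = p
  · rw [hq, Pi.single_eq_same]
  · obtain ⟨j, rfl⟩ : q ∈ Set.range (delIdx p) := range_delIdx p ▸ hq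
    rw [Pi.single_eq_of_ne hq]
    exact congrFun hx j

lemma exists_eq_comp_Pop {M : Type*} [AddCommGroup M] [Module F M]
    {g : (Fin k → F) →ₗ[F] M} {p : Fin k} (hg : ∀ c, g (Pi.single p c) = 0) :
    ∃ g' : (Fin (k - 1) → F) →ₗ[F] M, g = g' ∘ₗ Pop F p := by
  obtain ⟨r, hr⟩ := (Pop F p).exists_rightInverse_of_surjective
    (LinearMap.range_eq_top.2 (Pop_surjective F p))
  refine ⟨g ∘ₗ r, LinearMap.ext fun x => sub_eq_zero.1 ?_⟩
  have Pop_sub : Pop F p (x - r (Pop F p x)) = 0 := by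
    rw [map_sub, ← LinearMap.comp_apply (Pop F p) r, hr, LinearMap.id_apply, sub_self]
  rw [LinearMap.comp_apply, LinearMap.comp_apply, ← map_sub, eq_single_of_Pop_eq_zero Pop_sub, hg]

variable (F) in
/-- The operator `P_i E_J C E_I`. It belongs to `FO₂` when `|I|` and `|J|` are even and `I ≠ ∅`. -/
def facetOp (i : Fin k) (J I : Finset (Fin k)) :
    ((Fin k ⊕ Fin k) → F) →ₗ[F] (Fin (k - 1) → F) :=
  Pop F i ∘ₗ Eop F J ∘ₗ Cop F k ∘ₗ Eop F I

lemma mem_FOfin {T : ((Fin k ⊕ Fin k) → F) →ₗ[F] (Fin (k - 1) → F)} :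
    T ∈ FOfin F k ↔ (∃ i, T = Pop F i ∘ₗ Eop F ∅) ∨
      ∃ i J I, Even J.card ∧ I.Nonempty ∧ Even I.card ∧ T = facetOp F i J I := by
  classical
  simp [FOfin, facetOp, eq_comm, and_assoc]

variable (F k) in
lemma card_FOfin_le : #(FOfin F k) ≤ k + k * (2 ^ k * 2 ^ k) := by
  classical
  refine (Finset.card_union_le _ _).trans (add_le_add ?_ ?_)
  · exact Finset.card_image_le.trans (by simp)
  · exact Finset.card_image_le.trans ((Finset.card_filter_le _ _).trans (by simp))

lemma Eop_Cop_apply (J : Finset (Fin k)) (y : Fin k → F) (j : Fin k) :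
    Eop F J (Cop F k y) j = y j + if j ∈ J then ∑ p, y p else 0 := by
  by_cases h : j ∈ J <;> simp [Eop, Cop, h]

lemma Eop_surjective (I : Finset (Fin k)) : Function.Surjective (Eop F I) := fun y =>
  ⟨Sum.elim y y, by funext i; simp [Eop]⟩

/-- `E_J C` is the identity plus a matrix of rank at most one, of determinant `|J| + 1`. -/
lemma Eop_comp_Cop_surjective {J : Finset (Fin k)} (hJ : (J.card : F) + 1 ≠ 0) :
    Function.Surjective (Eop F J ∘ₗ Cop F k) := by
  intro z
  set c := (∑ p, z p) / ((J.card : F) + 1)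
  set y : Fin k → F := fun j => z j - if j ∈ J then c else 0
  have sum_y : ∑ p, y p = c := by
    simp only [y, c, Finset.sum_sub_distrib, Finset.sum_ite_mem, Finset.univ_inter,
      Finset.sum_const, nsmul_eq_mul]
    field_simp
    ring
  refine ⟨y, funext fun j => ?_⟩
  rw [LinearMap.comp_apply, Eop_Cop_apply, sum_y, sub_add_cancel]

lemma facetOp_surjective (i : Fin k) {J : Finset (Fin k)} (hJ : (J.card : F) + 1 ≠ 0)
    (I : Finset (Fin k)) : Function.Surjective (facetOp F i J I) :=
  (Pop_surjective F i).comp ((Eop_comp_Cop_surjective hJ).comp (Eop_surjective I))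

lemma leftPart_facetOp_single (i : Fin k) (J : Finset (Fin k)) {I : Finset (Fin k)} {p : Fin k}
    (hp : p ∈ I) (c : F) : leftPart (facetOp F i J I) (Pi.single p c) = 0 := by
  have Eop_single : Eop F I (inlMap F k (Pi.single p c)) = 0 := by
    funext j
    by_cases hj : j ∈ I
    · simp [Eop, inlMap, hj]
    · simp [Eop, inlMap, hj, (ne_of_mem_of_not_mem hp hj).symm]
  simp [leftPart, facetOp, Eop_single]

/-- The witness `e_p - e_q` with `p, q ∈ I` is fixed by `E_J C`, as its coordinates sum to zero. -/
lemma rightPart_facetOp_ne_zero (i : Fin k) (J : Finset (Fin k)) {I : Finset (Fin k)}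
    (hI : I.Nontrivial) : rightPart (facetOp F i J I) ≠ 0 := by
  obtain ⟨p, hp, hpi⟩ := hI.exists_ne i
  obtain ⟨q, hq, hqp⟩ := hI.exists_ne p
  obtain ⟨j, rfl⟩ : p ∈ Set.range (delIdx i) := range_delIdx i ▸ hpi
  set p := delIdx i j
  set y : Fin k → F := Pi.single p 1 - Pi.single q 1 with hy
  have Eop_y : Eop F I (inrMap F k y) = y := by
    funext l
    by_cases hl : l ∈ I
    · simp [Eop, inrMap, hl]
    · simp [Eop, inrMap, hl, hy, (ne_of_mem_of_not_mem hp hl).symm,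
        (ne_of_mem_of_not_mem hq hl).symm]
  have sum_y : ∑ l, y l = 0 := by simp [hy]
  have apply_y : rightPart (facetOp F i J I) y j = 1 := by
    simp only [rightPart, facetOp, LinearMap.comp_apply, Eop_y, Pop, LinearMap.funLeft_apply,
      Eop_Cop_apply, sum_y]
    simp [hy, p, hqp.symm]
  intro hzero
  simp [hzero] at apply_y

end Operators

section PartialDecomposition

lemma exists_perm_comp_eq {ι α : Type*} [Finite ι] {u v : ι → α} (hu : Function.Injective u)
    (huv : Set.range u ⊆ Set.range v) : ∃ σ : Equiv.Perm ι, v ∘ σ = u := by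
  obtain ⟨σ, rfl⟩ := Set.range_subset_range_iff_exists_comp.1 huv
  exact ⟨Equiv.ofBijective σ (Finite.injective_iff_bijective.1 hu.of_comp), rfl⟩

/-- `S` is a partial `K_k`-decomposition of `L`: a set of `k`-sets whose facets all lie in `L`,
no facet being contained in two of them. -/
structure IsPartialKDecompositionOf {V : Type*} (k : ℕ) (L S : Finset (Finset V)) : Prop where
  card_eq : ∀ e ∈ S, e.card = k
  facet_mem : ∀ e ∈ S, ∀ f ⊆ e, f.card = k - 1 → f ∈ L
  eq_of_facet_subset : ∀ e ∈ S, ∀ e' ∈ S, ∀ f : Finset V,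
    f.card = k - 1 → f ⊆ e → f ⊆ e' → e = e'

lemma IsKDecompositionOf.isPartialKDecompositionOf {V : Type*} [DecidableEq V] {k : ℕ}
    {L S : Finset (Finset V)} (hS : IsKDecompositionOf k L S) :
    IsPartialKDecompositionOf k L S where
  card_eq e he := (hS.1 e he).1
  facet_mem e he := (hS.1 e he).2
  eq_of_facet_subset e he _ he' f hf hfe hfe' :=
    (hS.2 f ((hS.1 e he).2 f hfe hf)).unique ⟨he, hfe⟩ ⟨he', hfe'⟩

/-- The `p`-th facet of the edge with vertices `u 0, …, u (k - 1)`. -/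
def facet {V : Type*} [DecidableEq V] {k : ℕ} (u : Fin k → V) (p : Fin k) : Finset V :=
  Finset.univ.image (u ∘ delIdx p)

lemma facet_subset_image {V : Type*} [DecidableEq V] {k : ℕ} (u : Fin k → V) (p : Fin k) :
    facet u p ⊆ Finset.univ.image u := by
  rw [facet, ← Finset.image_image]
  exact Finset.image_subset_image (Finset.subset_univ _)

lemma card_facet {V : Type*} [DecidableEq V] {k : ℕ} {u : Fin k → V} (hu : Function.Injective u)
    (p : Fin k) : #(facet u p) = k - 1 := by
  rw [facet, Finset.card_image_of_injective _ (hu.comp (delIdx_injective p)), Finset.card_fin]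

lemma ncard_image_comp_ord {V ι α : Type*} [DecidableEq V] [Fintype ι] {τ : V → α}
    (hτ : Function.Injective τ) {L : Finset (Finset V)} {ordL : Finset V → ι → V}
    (hordL : ∀ f ∈ L, Finset.image (ordL f) Finset.univ = f) :
    Set.ncard ((fun f => τ ∘ ordL f) '' (L : Set (Finset V))) = #L := by
  have hinj : Set.InjOn (fun f => τ ∘ ordL f) L := fun f hf f' hf' h => by
    rw [← hordL f hf, ← hordL f' hf', hτ.comp_left h]
  rw [hinj.ncard_image, Set.ncard_coe_finset]

namespace IsPartialKDecompositionOf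

variable {V : Type*} [DecidableEq V] {k : ℕ} {L S : Finset (Finset V)}
  {ordS : Finset V → Fin k → V} {e : Finset V} (hS : IsPartialKDecompositionOf k L S)
  (hordS : ∀ e ∈ S, Finset.image (ordS e) Finset.univ = e)

include hS hordS

lemma injective_ord (he : e ∈ S) : Function.Injective (ordS e) := by
  rw [← Set.injOn_univ, ← Finset.coe_univ, ← Finset.card_image_iff, hordS e he, hS.card_eq e he,
    Finset.card_fin]

lemma facet_ord_mem (he : e ∈ S) (p : Fin k) : facet (ordS e) p ∈ L :=
  hS.facet_mem e he _ ((facet_subset_image _ p).trans (hordS e he).subset)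
    (card_facet (hS.injective_ord hordS he) p)

lemma injOn_facet_ord (p : Fin k) : Set.InjOn (fun e => facet (ordS e) p) S := fun e he e' he' h =>
  hS.eq_of_facet_subset e he e' he' _ (card_facet (hS.injective_ord hordS he) p)
    ((facet_subset_image _ p).trans (hordS e he).subset)
    ((Eq.subset h).trans ((facet_subset_image _ p).trans (hordS e' he').subset))

variable {F : Type*} [Field F] {τ : V → F}

lemma Pop_mem_reorderings {ordL : Finset V → Fin (k - 1) → V}
    (hordL : ∀ f ∈ L, Finset.image (ordL f) Finset.univ = f) (he : e ∈ S) (p : Fin k) :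
    Pop F p (τ ∘ ordS e) ∈ reorderings ((fun f => τ ∘ ordL f) '' (L : Set (Finset V))) := by
  have hf := hS.facet_ord_mem hordS he p
  have range_eq : Set.range (ordS e ∘ delIdx p) = Set.range (ordL (facet (ordS e) p)) := by
    simpa only [facet, Finset.coe_image, Finset.coe_univ, Set.image_univ] using
      congrArg (fun f : Finset V => (f : Set V)) (hordL _ hf).symm
  obtain ⟨σ, hσ⟩ := exists_perm_comp_eq
    ((hS.injective_ord hordS he).comp (delIdx_injective p)) range_eq.subset
  exact Set.mem_iUnion.2 ⟨σ, _, ⟨_, hf, rfl⟩, congrArg (τ ∘ ·) hσ⟩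

lemma injOn_Pop (hτ : Function.Injective τ) (p : Fin k) :
    Set.InjOn (fun e => Pop F p (τ ∘ ordS e)) S := fun e he e' he' h =>
  hS.injOn_facet_ord hordS p he he'
    (congrArg (Finset.univ.image ·) (hτ.comp_left h : ordS e ∘ delIdx p = ordS e' ∘ delIdx p))

lemma Pop_comp_Eop_empty_ne (hτ : Function.Injective τ) {u : Fin (k - 1) → V}
    (hu : Finset.univ.image u ∉ L) (he : e ∈ S) (i : Fin k) (a : Fin k → F) :
    leftPart (Pop F i ∘ₗ Eop F ∅) (τ ∘ ordS e) + rightPart (Pop F i ∘ₗ Eop F ∅) a ≠ τ ∘ u := by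
  intro ha
  rw [leftPart_add_rightPart] at ha
  have Pop_eq : τ ∘ (ordS e ∘ delIdx i) = τ ∘ u := by
    rw [← ha]
    funext j
    simp [Pop, Eop, LinearMap.funLeft_apply]
  rw [← hτ.comp_left Pop_eq] at hu
  exact hu (hS.facet_ord_mem hordS he i)

theorem sum_ncard_solutions_le [Fintype F] {ordL : Finset V → Fin (k - 1) → V}
    (hordL : ∀ f ∈ L, Finset.image (ordL f) Finset.univ = f) (hτ : Function.Injective τ) {C : ℝ}
    (hQ : AffineBounded F C ((fun f => τ ∘ ordL f) '' (L : Set (Finset V))))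
    {T : ((Fin k ⊕ Fin k) → F) →ₗ[F] (Fin (k - 1) → F)} (hT : Function.Surjective T)
    {p : Fin k} (hleft : ∀ c, leftPart T (Pi.single p c) = 0) (hright : rightPart T ≠ 0)
    (t : Fin (k - 1) → F) :
    ∑ s ∈ S, (Set.ncard {a | leftPart T (τ ∘ ordS s) + rightPart T a = t} : ℝ) ≤
      (k - 1).factorial * C * Fintype.card F * #L := by
  obtain ⟨g, hg⟩ := exists_eq_comp_Pop hleft
  have range_sup : LinearMap.range g ⊔ LinearMap.range (rightPart T) = ⊤ := by
    refine eq_top_mono (sup_le_sup_right ?_ _) (range_leftPart_sup_range_rightPart hT)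
    exact hg ▸ LinearMap.range_comp_le_range _ _
  have hbound := hQ.sum_ncard_solutions_le range_sup
    (comap_ne_bot_of_ne_bot (mt LinearMap.range_eq_bot.1 hright))
    (fun e he => hS.Pop_mem_reorderings hordS hordL he p) (hS.injOn_Pop hordS hτ p) t
  have card_eq : (Fintype.card F : ℝ) ^ k = Fintype.card F ^ (k - 1) * Fintype.card F := by
    rw [← pow_succ, Nat.sub_add_cancel (Nat.one_le_of_lt p.pos)]
  simp only [ncard_image_comp_ord hτ hordL, Nat.card_eq_fintype_card, Fintype.card_fun,
    Fintype.card_fin, Nat.cast_pow, card_eq] at hbound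
  rw [hg]
  refine hbound.trans_eq ?_
  field_simp

end IsPartialKDecompositionOf

end PartialDecomposition

theorem stmt_8_general {V F : Type*} [DecidableEq V] [Field F] [Fintype F] [CharP F 2] {k : ℕ}
    {τ : V → F} (hτ : Function.Injective τ) {C : ℝ} (hC : 0 ≤ C) {L S : Finset (Finset V)}
    (hS : IsPartialKDecompositionOf k L S) {ordL : Finset V → Fin (k - 1) → V}
    (hordL : ∀ f ∈ L, Finset.image (ordL f) Finset.univ = f) {ordS : Finset V → Fin k → V}
    (hordS : ∀ e ∈ S, Finset.image (ordS e) Finset.univ = e)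
    (hQ : AffineBounded F C ((fun f => τ ∘ ordL f) '' (L : Set (Finset V))))
    {u : Fin (k - 1) → V} (hu : Finset.univ.image u ∉ L) :
    ∑ T ∈ FOfin F k, ∑ s ∈ S,
        (Set.ncard {a | leftPart T (τ ∘ ordS s) + rightPart T a = τ ∘ u} : ℝ) ≤
      #(FOfin F k) * ((k - 1).factorial * C * Fintype.card F * #L) := by
  rw [← nsmul_eq_mul]
  refine Finset.sum_le_card_nsmul _ _ _ fun T hT => ?_
  obtain ⟨i, rfl⟩ | ⟨i, J, I, hJ, ⟨p, hp⟩, hI, rfl⟩ := mem_FOfin.1 hT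
  · refine (Finset.sum_eq_zero fun s hs => ?_).trans_le (by positivity)
    simp [hS.Pop_comp_Eop_empty_ne hordS hτ hu hs i]
  · have card_J : (#J : F) + 1 ≠ 0 := by
      rw [(CharP.cast_eq_zero_iff F 2 _).2 hJ.two_dvd, zero_add]
      exact one_ne_zero
    have hI' : I.Nontrivial := Finset.one_lt_card_iff_nontrivial.1 <| by
      have := Finset.card_pos.2 ⟨p, hp⟩
      grind
    exact hS.sum_ncard_solutions_le hordS hordL hτ hQ (facetOp_surjective i card_J I)
      (leftPart_facetOp_single i J hp) (rightPart_facetOp_ne_zero i J hI') _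

/-- if `τ(L)` is `C`-affine-bounded and `S` is a `K_k`-decomposition
of `L`, then for every facet `f ∉ L`,
`Σ_{T ∈ FO} Σ_{s ∈ S} |{a : T₁ τ(s) + T₂ a = τ(f)}| ≤ D·C·|F|·|L|`. -/
theorem stmt_8 (k : ℕ) (hk : 2 ≤ k) :
    ∃ D : ℝ, 0 < D ∧
      ∀ (n m : ℕ) (F : Type) [Field F] [Fintype F],
        ringChar F = 2 → Fintype.card F = 2 ^ m → 2 * n ≤ 2 ^ m → 2 ^ m ≤ 4 * n →
        ∀ τ : Fin n → F, Function.Injective τ → (∀ v, τ v ≠ 0) →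
          ∀ C : ℝ, 0 < C →
            ∀ L S : Finset (Finset (Fin n)), (∀ f ∈ L, f.card = k - 1) →
              IsKDecompositionOf k L S →
              ∀ ordL : Finset (Fin n) → Fin (k - 1) → Fin n,
                (∀ f : Finset (Fin n), f.card = k - 1 →
                    Finset.image (ordL f) Finset.univ = f) →
              ∀ ordS : Finset (Fin n) → Fin k → Fin n,
                (∀ e : Finset (Fin n), e.card = k →
                    Finset.image (ordS e) Finset.univ = e) →
              AffineBounded F C ((fun f => τ ∘ ordL f) '' (L : Set (Finset (Fin n)))) →
              ∀ f : Finset (Fin n), f.card = k - 1 → f ∉ L →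
                ∑ T ∈ FOfin F k, ∑ s ∈ S,
                    (Set.ncard {a : Fin k → F |
                        leftPart T (τ ∘ ordS s) + rightPart T a = τ ∘ ordL f} : ℝ) ≤
                  D * C * (Fintype.card F : ℝ) * (L.card : ℝ) := by
  refine ⟨(k + k * (2 ^ k * 2 ^ k)) * (k - 1).factorial, by positivity, ?_⟩
  intro n m F _ _ hchar _ _ _ τ hτ _ C hC L S hL hS ordL hordL ordS hordS hQ f hf hfL
  have : CharP F 2 := ringChar.of_eq hchar
  have hbound := stmt_8_general hτ hC.le hS.isPartialKDecompositionOf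
    (fun f hf => hordL f (hL f hf)) (fun e he => hordS e (hS.1 e he).1) hQ
    (u := ordL f) (by rwa [hordL f hf])
  refine hbound.trans ?_
  have hcard : (#(FOfin F k) : ℝ) ≤ k + k * (2 ^ k * 2 ^ k) := by
    exact_mod_cast card_FOfin_le F k
  calc _ ≤ (k + k * (2 ^ k * 2 ^ k)) * ((k - 1).factorial * C * Fintype.card F * #L) := by gcongr
    _ = _ := by ring
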